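/- arXiv:2105.06563 — 2 statements merged into one kernel-verified Lean document; each statement's English description precedes it below -/
import Mathlib

section
/- Fix E > 0. For a ∈ (0, 1) define the 2×2 real matrices T_a = [[cos(√E a), sin(√E a)/√E], [−√E sin(√E a), cos(√E a)]], B(y) = [[1, 0], [y, 1]], and set y₁(a) = a^{−3/2} − a^{−1}, y₂(a) = a^{−1/2} − a^{−1}, M⁽¹⁾_a = B(y₁(a)) T_a, M⁽²⁾_a = B(y₂(a)) T_a. Then the matrix product M_a(E) = M⁽²⁾_a (M⁽¹⁾_a)² M⁽²⁾_a M⁽¹⁾_a (M⁽²⁾_a)² M⁽¹⁾_a converges entrywise, as a → 0⁺, to the matrix M(E) = [[1 − (5/3)E, 1], [−(5/3)E, 1]]. -/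
open Filter Matrix

/-- The free transfer matrix over an interval of length `a` at energy `E`. -/
noncomputable def freeT (E a : ℝ) : Matrix (Fin 2) (Fin 2) ℝ :=
  Matrix.of
    ![![Real.cos (Real.sqrt E * a), Real.sin (Real.sqrt E * a) / Real.sqrt E],
      ![-(Real.sqrt E * Real.sin (Real.sqrt E * a)), Real.cos (Real.sqrt E * a)]]

/-- The transfer matrix across a delta distribution of strength `y`. -/
def deltaB (y : ℝ) : Matrix (Fin 2) (Fin 2) ℝ :=
  Matrix.of ![![1, 0], ![y, 1]]

noncomputable def y₁ (a : ℝ) : ℝ := a ^ (-(3 : ℝ) / 2) - a⁻¹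
noncomputable def y₂ (a : ℝ) : ℝ := a ^ (-(1 : ℝ) / 2) - a⁻¹

noncomputable def Mone (E a : ℝ) : Matrix (Fin 2) (Fin 2) ℝ := deltaB (y₁ a) * freeT E a
noncomputable def Mtwo (E a : ℝ) : Matrix (Fin 2) (Fin 2) ℝ := deltaB (y₂ a) * freeT E a

/-- The transfer matrix from `0` to `8a`:
`M_a(E) = M⁽²⁾(M⁽¹⁾)² M⁽²⁾ M⁽¹⁾ (M⁽²⁾)² M⁽¹⁾`. -/
noncomputable def Mfull (E a : ℝ) : Matrix (Fin 2) (Fin 2) ℝ :=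
  Mtwo E a * (Mone E a) ^ 2 * Mtwo E a * Mone E a * (Mtwo E a) ^ 2 * Mone E a

noncomputable def A1 (s E p q : ℝ) : Matrix (Fin 2) (Fin 2) ℝ :=
  deltaB (1/s^3 - 1/s^2) * !![1 + s^4*p, s^2*(1+s^4*q); -(E*(s^2*(1+s^4*q))), 1+s^4*p]
noncomputable def A2 (s E p q : ℝ) : Matrix (Fin 2) (Fin 2) ℝ :=
  deltaB (1/s - 1/s^2) * !![1 + s^4*p, s^2*(1+s^4*q); -(E*(s^2*(1+s^4*q))), 1+s^4*p]
def PX00 (s E p q : ℝ) : ℝ :=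
  1 + s^3*(-2*q + 2*p - E + s^1*(3*q + p - E + s^1*(-3*E + s^1*(-q + p - E + s^1*(-q^2 - 4*p*q
    + 5*p^2 - 3*E*q - E*p + s^1*(9*p*q - 3*p^2 + 2*E*q - 6*E*p + E^2 + s^1*(3*q^2 - 6*p*q +
    3*p^2 - 7*E*q - 5*E*p + s^1*(-2*q^2 + p*q + p^2 - 4*E*q + s^1*(q^3 - 5*p*q^2 + p^2*q +
    3*p^3 - 3*E*q^2 - 3*E*p*q + s^1*(-3*q^3 + 9*p*q^2 - 2*p^3 + 6*E*q^2 - 6*E*p*q - 6*E*p^2 +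
    4*E^2*q + s^1*(3*q^3 - 3*p*q^2 - 3*p^2*q + 3*p^3 - 3*E*q^2 - 15*E*p*q + s^1*(-q^3 - p*q^2 +
    2*p^2*q - 6*E*q^2 + s^1*(p*q^3 - 4*p^2*q^2 + 3*p^3*q - E*q^3 - 3*E*p*q^2 + s^1*(-3*p*q^3 +
    9*p^2*q^2 - 6*p^3*q + p^4 + 2*E*q^3 + 6*E*p*q^2 - 12*E*p^2*q + 6*E^2*q^2 + s^1*(3*p*q^3 -
    6*p^2*q^2 + 3*p^3*q + 3*E*q^3 - 15*E*p*q^2 + s^1*(-p*q^3 + p^2*q^2 - 4*E*q^3 +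
    s^1*(-E*p*q^3 + s^1*(-E*q^4 + 6*E*p*q^3 - 6*E*p^2*q^2 + 4*E^2*q^3 + s^1*(2*E*q^4 -
    5*E*p*q^3 + s^1*(-E*q^4 + s^2*(E^2*q^4)))))))))))))))))))))

lemma PX00_cont (E : ℝ) : Continuous (fun t : ℝ × ℝ × ℝ => PX00 t.1 E t.2.1 t.2.2) := by
  unfold PX00
  fun_prop

lemma PX00_eq (s E p q : ℝ) (hs : s ≠ 0) : (A1 s E p q * A2 s E p q * (A2 s E p q * A1 s E p q)) 0 0 = PX00 s E p q := by
  simp only [A1, A2, deltaB, PX00, Matrix.mul_apply, Fin.sum_univ_two]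
  simp
  field_simp
  ring

def PX01 (s E p q : ℝ) : ℝ :=
  s^2*(1 + s^1*(2 + s^1*(1 + s^1*(-2*q + 2*p - E + s^1*(2*q + 2*p - 2*E + s^1*(2*q + 6*p - E +
    s^1*(2*q + 2*p + s^1*(-3*q^2 + 3*p^2 - 4*E*q + s^1*(2*q^2 + 2*p*q + 2*p^2 - 4*E*q - 4*E*p +
    s^1*(q^2 + 4*p*q + 7*p^2 - 4*E*q + s^1*(6*p*q + s^1*(-6*p*q^2 + 6*p^2*q - 6*E*q^2 +
    s^1*(-2*q^3 + 10*p*q^2 - 8*p^2*q + 4*p^3 - 12*E*p*q + s^1*(4*q^3 - 10*p*q^2 + 14*p^2*q -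
    6*E*q^2 + s^1*(-2*q^3 + 6*p*q^2 + s^1*(q^4 - 4*p*q^3 + 3*p^2*q^2 - 4*E*q^3 + s^1*(-3*q^4 +
    10*p*q^3 - 10*p^2*q^2 + 4*p^3*q + 4*E*q^3 - 12*E*p*q^2 + s^1*(3*q^4 - 8*p*q^3 + 7*p^2*q^2 -
    4*E*q^3 + s^1*(-q^4 + 2*p*q^3 + s^1*(-E*q^4 + s^1*(2*E*q^4 - 4*E*p*q^3 +
    s^1*(-E*q^4))))))))))))))))))))))

lemma PX01_cont (E : ℝ) : Continuous (fun t : ℝ × ℝ × ℝ => PX01 t.1 E t.2.1 t.2.2) := by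
  unfold PX01
  fun_prop

lemma PX01_eq (s E p q : ℝ) (hs : s ≠ 0) : (A1 s E p q * A2 s E p q * (A2 s E p q * A1 s E p q)) 0 1 = PX01 s E p q := by
  simp only [A1, A2, deltaB, PX01, Matrix.mul_apply, Fin.sum_univ_two]
  simp
  field_simp
  ring

def PX10 (s E p q : ℝ) : ℝ :=
  -2*q + 2*p - E + s^1*(4*q - 4*p - 2*E + s^1*(-2*q + 2*p - E + s^2*(-q^2 - 4*p*q + 5*p^2 -
    3*E*q - E*p + s^1*(2*q^2 + 8*p*q - 10*p^2 + 2*E*q - 10*E*p + E^2 + s^1*(-6*p*q + 6*p^2 -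
    6*E*q + 2*E*p + 2*E^2 + s^1*(-2*q^2 + 4*p*q - 2*p^2 + 2*E*q - 2*E*p + E^2 + s^1*(q^2 + q^3
    - 2*p*q - 5*p*q^2 + p^2 + p^2*q + 3*p^3 + E*q - 3*E*q^2 - E*p - 3*E*p*q + s^1*(-4*q^3 +
    16*p*q^2 - 8*p^2*q - 4*p^3 + 9*E*q^2 - 12*E*p*q - 9*E*p^2 + 4*E^2*q + s^1*(6*q^3 - 18*p*q^2
    + 12*p^2*q - 10*E*q^2 + 2*E*p*q + 2*E*p^2 + 4*E^2*q + 4*E^2*p + s^1*(-4*q^3 + 8*p*q^2 -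
    4*p^2*q + E*q^2 + 4*E*p*q - 5*E*p^2 + 4*E^2*q + s^1*(q^3 - p*q^2 + p*q^3 - p^2*q -
    4*p^2*q^2 + p^3 + 3*p^3*q + 3*E*q^2 - E*q^3 - 3*E*p*q - 3*E*p*q^2 + s^1*(-4*p*q^3 +
    14*p^2*q^2 - 12*p^3*q + 2*p^4 + 4*E*q^3 + 6*E*p*q^2 - 18*E*p^2*q + 6*E^2*q^2 + s^1*(6*p*q^3
    - 18*p^2*q^2 + 16*p^3*q - 4*p^4 - 2*E*q^3 - 14*E*p*q^2 + 16*E*p^2*q - 4*E*p^3 + 12*E^2*p*q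
    + s^1*(-4*p*q^3 + 10*p^2*q^2 - 8*p^3*q + 2*p^4 - 4*E*q^3 + 14*E*p*q^2 - 10*E*p^2*q +
    6*E^2*q^2 + s^1*(p*q^3 - 2*p^2*q^2 + p^3*q + 3*E*q^3 - 3*E*p*q^2 - E*p*q^3 + s^1*(-E*q^4 +
    8*E*p*q^3 - 9*E*p^2*q^2 + 4*E^2*q^3 + s^1*(3*E*q^4 - 14*E*p*q^3 + 14*E*p^2*q^2 - 4*E*p^3*q
    - 4*E^2*q^3 + 12*E^2*p*q^2 + s^1*(-3*E*q^4 + 8*E*p*q^3 - 5*E*p^2*q^2 + 4*E^2*q^3 +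
    s^1*(E*q^4 - E*p*q^3 + s^1*(E^2*q^4 + s^1*(-2*E^2*q^4 + 4*E^2*p*q^3 +
    s^1*(E^2*q^4))))))))))))))))))))))

lemma PX10_cont (E : ℝ) : Continuous (fun t : ℝ × ℝ × ℝ => PX10 t.1 E t.2.1 t.2.2) := by
  unfold PX10
  fun_prop

lemma PX10_eq (s E p q : ℝ) (hs : s ≠ 0) : (A1 s E p q * A2 s E p q * (A2 s E p q * A1 s E p q)) 1 0 = PX10 s E p q := by
  simp only [A1, A2, deltaB, PX10, Matrix.mul_apply, Fin.sum_univ_two]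
  simp
  field_simp
  ring

def PX11 (s E p q : ℝ) : ℝ :=
  1 + s^2*(-2*q + 2*p - E + s^1*(2*q - 2*p - 3*E + s^1*(q + 3*p - E + s^1*(-E + s^1*(-q - 3*q^2
    + p + 3*p^2 - 4*E*q + s^1*(5*q^2 - 4*p*q - p^2 - 5*E*q - 7*E*p + s^1*(-2*q^2 + 7*p*q + p^2
    - 2*E*q - 2*E*p + E^2 + s^1*(q^2 - 2*p*q + p^2 - E*q - 3*E*p + s^1*(-q^2 - p*q - 6*p*q^2 +
    2*p^2 + 6*p^2*q - 6*E*q^2 + s^1*(-q^3 + 13*p*q^2 - 17*p^2*q + 5*p^3 + 3*E*q^2 - 21*E*p*q +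
    s^1*(3*q^3 - 13*p*q^2 + 20*p^2*q - 6*p^3 - 6*E*q^2 + 6*E*p*q - 6*E*p^2 + 4*E^2*q +
    s^1*(-3*q^3 + 11*p*q^2 - 13*p^2*q + 5*p^3 + 3*E*q^2 - 9*E*p*q + s^1*(q^3 + q^4 - 5*p*q^2 -
    4*p*q^3 + 4*p^2*q + 3*p^2*q^2 - 4*E*q^3 + s^1*(-4*q^4 + 15*p*q^3 - 16*p^2*q^2 + 5*p^3*q +
    9*E*q^3 - 21*E*p*q^2 + s^1*(6*q^4 - 21*p*q^3 + 25*p^2*q^2 - 10*p^3*q + p^4 - 10*E*q^3 +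
    18*E*p*q^2 - 12*E*p^2*q + 6*E^2*q^2 + s^1*(-4*q^4 + 13*p*q^3 - 14*p^2*q^2 + 5*p^3*q +
    5*E*q^3 - 9*E*p*q^2 + s^1*(q^4 - 3*p*q^3 + 2*p^2*q^2 - E*q^4 + s^1*(4*E*q^4 - 7*E*p*q^3 +
    s^1*(-5*E*q^4 + 10*E*p*q^3 - 6*E*p^2*q^2 + 4*E^2*q^3 + s^1*(2*E*q^4 - 3*E*p*q^3 +
    s^3*(E^2*q^4)))))))))))))))))))))

lemma PX11_cont (E : ℝ) : Continuous (fun t : ℝ × ℝ × ℝ => PX11 t.1 E t.2.1 t.2.2) := by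
  unfold PX11
  fun_prop

lemma PX11_eq (s E p q : ℝ) (hs : s ≠ 0) : (A1 s E p q * A2 s E p q * (A2 s E p q * A1 s E p q)) 1 1 = PX11 s E p q := by
  simp only [A1, A2, deltaB, PX11, Matrix.mul_apply, Fin.sum_univ_two]
  simp
  field_simp
  ring

def PY00 (s E p q : ℝ) : ℝ :=
  1 + s^2*(-q + p - E + s^1*(-3*E + s^1*(3*q + p - E + s^1*(-2*q + 2*p - E + s^1*(-2*q^2 + p*q
    + p^2 - 4*E*q + s^1*(3*q^2 - 6*p*q + 3*p^2 - 7*E*q - 5*E*p + s^1*(9*p*q - 3*p^2 + 2*E*q -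
    6*E*p + E^2 + s^1*(-q^2 - 4*p*q + 5*p^2 - 3*E*q - E*p + s^1*(-q^3 - p*q^2 + 2*p^2*q -
    6*E*q^2 + s^1*(3*q^3 - 3*p*q^2 - 3*p^2*q + 3*p^3 - 3*E*q^2 - 15*E*p*q + s^1*(-3*q^3 +
    9*p*q^2 - 2*p^3 + 6*E*q^2 - 6*E*p*q - 6*E*p^2 + 4*E^2*q + s^1*(q^3 - 5*p*q^2 + p^2*q +
    3*p^3 - 3*E*q^2 - 3*E*p*q + s^1*(-p*q^3 + p^2*q^2 - 4*E*q^3 + s^1*(3*p*q^3 - 6*p^2*q^2 +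
    3*p^3*q + 3*E*q^3 - 15*E*p*q^2 + s^1*(-3*p*q^3 + 9*p^2*q^2 - 6*p^3*q + p^4 + 2*E*q^3 +
    6*E*p*q^2 - 12*E*p^2*q + 6*E^2*q^2 + s^1*(p*q^3 - 4*p^2*q^2 + 3*p^3*q - E*q^3 - 3*E*p*q^2 +
    s^1*(-E*q^4 + s^1*(2*E*q^4 - 5*E*p*q^3 + s^1*(-E*q^4 + 6*E*p*q^3 - 6*E*p^2*q^2 + 4*E^2*q^3
    + s^1*(-E*p*q^3 + s^3*(E^2*q^4)))))))))))))))))))))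

lemma PY00_cont (E : ℝ) : Continuous (fun t : ℝ × ℝ × ℝ => PY00 t.1 E t.2.1 t.2.2) := by
  unfold PY00
  fun_prop

lemma PY00_eq (s E p q : ℝ) (hs : s ≠ 0) : (A2 s E p q * A1 s E p q * (A1 s E p q * A2 s E p q)) 0 0 = PY00 s E p q := by
  simp only [A1, A2, deltaB, PY00, Matrix.mul_apply, Fin.sum_univ_two]
  simp
  field_simp
  ring

def PY01 (s E p q : ℝ) : ℝ :=
  1 + s^1*(2 + s^1*(1 + s^2*(2*q + 2*p + s^1*(2*q + 6*p - E + s^1*(2*q + 2*p - 2*E + s^1*(-2*q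
    + 2*p - E + s^1*(6*p*q + s^1*(q^2 + 4*p*q + 7*p^2 - 4*E*q + s^1*(2*q^2 + 2*p*q + 2*p^2 -
    4*E*q - 4*E*p + s^1*(-3*q^2 + 3*p^2 - 4*E*q + s^1*(-2*q^3 + 6*p*q^2 + s^1*(4*q^3 - 10*p*q^2
    + 14*p^2*q - 6*E*q^2 + s^1*(-2*q^3 + 10*p*q^2 - 8*p^2*q + 4*p^3 - 12*E*p*q + s^1*(-6*p*q^2
    + 6*p^2*q - 6*E*q^2 + s^1*(-q^4 + 2*p*q^3 + s^1*(3*q^4 - 8*p*q^3 + 7*p^2*q^2 - 4*E*q^3 +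
    s^1*(-3*q^4 + 10*p*q^3 - 10*p^2*q^2 + 4*p^3*q + 4*E*q^3 - 12*E*p*q^2 + s^1*(q^4 - 4*p*q^3 +
    3*p^2*q^2 - 4*E*q^3 + s^2*(-E*q^4 + s^1*(2*E*q^4 - 4*E*p*q^3 +
    s^1*(-E*q^4)))))))))))))))))))))

lemma PY01_cont (E : ℝ) : Continuous (fun t : ℝ × ℝ × ℝ => PY01 t.1 E t.2.1 t.2.2) := by
  unfold PY01
  fun_prop

lemma PY01_eq (s E p q : ℝ) (hs : s ≠ 0) : (A2 s E p q * A1 s E p q * (A1 s E p q * A2 s E p q)) 0 1 = PY01 s E p q := by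
  simp only [A1, A2, deltaB, PY01, Matrix.mul_apply, Fin.sum_univ_two]
  simp
  field_simp
  ring

def PY10 (s E p q : ℝ) : ℝ :=
  s^2*(-2*q + 2*p - E + s^1*(4*q - 4*p - 2*E + s^1*(-2*q + q^2 + 2*p - 2*p*q + p^2 - E + E*q -
    E*p + s^1*(-2*q^2 + 4*p*q - 2*p^2 + 2*E*q - 2*E*p + E^2 + s^1*(-6*p*q + 6*p^2 - 6*E*q +
    2*E*p + 2*E^2 + s^1*(2*q^2 + 8*p*q - 10*p^2 + 2*E*q - 10*E*p + E^2 + s^1*(-q^2 + q^3 -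
    4*p*q - p*q^2 + 5*p^2 - p^2*q + p^3 - 3*E*q + 3*E*q^2 - E*p - 3*E*p*q + s^1*(-4*q^3 +
    8*p*q^2 - 4*p^2*q + E*q^2 + 4*E*p*q - 5*E*p^2 + 4*E^2*q + s^1*(6*q^3 - 18*p*q^2 + 12*p^2*q
    - 10*E*q^2 + 2*E*p*q + 2*E*p^2 + 4*E^2*q + 4*E^2*p + s^1*(-4*q^3 + 16*p*q^2 - 8*p^2*q -
    4*p^3 + 9*E*q^2 - 12*E*p*q - 9*E*p^2 + 4*E^2*q + s^1*(q^3 - 5*p*q^2 + p*q^3 + p^2*q -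
    2*p^2*q^2 + 3*p^3 + p^3*q - 3*E*q^2 + 3*E*q^3 - 3*E*p*q - 3*E*p*q^2 + s^1*(-4*p*q^3 +
    10*p^2*q^2 - 8*p^3*q + 2*p^4 - 4*E*q^3 + 14*E*p*q^2 - 10*E*p^2*q + 6*E^2*q^2 + s^1*(6*p*q^3
    - 18*p^2*q^2 + 16*p^3*q - 4*p^4 - 2*E*q^3 - 14*E*p*q^2 + 16*E*p^2*q - 4*E*p^3 + 12*E^2*p*q
    + s^1*(-4*p*q^3 + 14*p^2*q^2 - 12*p^3*q + 2*p^4 + 4*E*q^3 + 6*E*p*q^2 - 18*E*p^2*q +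
    6*E^2*q^2 + s^1*(p*q^3 - 4*p^2*q^2 + 3*p^3*q - E*q^3 + E*q^4 - 3*E*p*q^2 - E*p*q^3 +
    s^1*(-3*E*q^4 + 8*E*p*q^3 - 5*E*p^2*q^2 + 4*E^2*q^3 + s^1*(3*E*q^4 - 14*E*p*q^3 +
    14*E*p^2*q^2 - 4*E*p^3*q - 4*E^2*q^3 + 12*E^2*p*q^2 + s^1*(-E*q^4 + 8*E*p*q^3 - 9*E*p^2*q^2
    + 4*E^2*q^3 + s^1*(-E*p*q^3 + s^1*(E^2*q^4 + s^1*(-2*E^2*q^4 + 4*E^2*p*q^3 +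
    s^1*(E^2*q^4))))))))))))))))))))))

lemma PY10_cont (E : ℝ) : Continuous (fun t : ℝ × ℝ × ℝ => PY10 t.1 E t.2.1 t.2.2) := by
  unfold PY10
  fun_prop

lemma PY10_eq (s E p q : ℝ) (hs : s ≠ 0) : (A2 s E p q * A1 s E p q * (A1 s E p q * A2 s E p q)) 1 0 = PY10 s E p q := by
  simp only [A1, A2, deltaB, PY10, Matrix.mul_apply, Fin.sum_univ_two]
  simp
  field_simp
  ring

def PY11 (s E p q : ℝ) : ℝ :=
  1 + s^2*(-q + p + s^1*(-E + s^1*(q + 3*p - E + s^1*(2*q - 2*p - 3*E + s^1*(-2*q - q^2 + 2*p -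
    p*q + 2*p^2 - E + s^1*(q^2 - 2*p*q + p^2 - E*q - 3*E*p + s^1*(-2*q^2 + 7*p*q + p^2 - 2*E*q
    - 2*E*p + E^2 + s^1*(5*q^2 - 4*p*q - p^2 - 5*E*q - 7*E*p + s^1*(-3*q^2 + q^3 - 5*p*q^2 +
    3*p^2 + 4*p^2*q - 4*E*q + s^1*(-3*q^3 + 11*p*q^2 - 13*p^2*q + 5*p^3 + 3*E*q^2 - 9*E*p*q +
    s^1*(3*q^3 - 13*p*q^2 + 20*p^2*q - 6*p^3 - 6*E*q^2 + 6*E*p*q - 6*E*p^2 + 4*E^2*q +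
    s^1*(-q^3 + 13*p*q^2 - 17*p^2*q + 5*p^3 + 3*E*q^2 - 21*E*p*q + s^1*(q^4 - 6*p*q^2 - 3*p*q^3
    + 6*p^2*q + 2*p^2*q^2 - 6*E*q^2 + s^1*(-4*q^4 + 13*p*q^3 - 14*p^2*q^2 + 5*p^3*q + 5*E*q^3 -
    9*E*p*q^2 + s^1*(6*q^4 - 21*p*q^3 + 25*p^2*q^2 - 10*p^3*q + p^4 - 10*E*q^3 + 18*E*p*q^2 -
    12*E*p^2*q + 6*E^2*q^2 + s^1*(-4*q^4 + 15*p*q^3 - 16*p^2*q^2 + 5*p^3*q + 9*E*q^3 -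
    21*E*p*q^2 + s^1*(q^4 - 4*p*q^3 + 3*p^2*q^2 - 4*E*q^3 + s^1*(2*E*q^4 - 3*E*p*q^3 +
    s^1*(-5*E*q^4 + 10*E*p*q^3 - 6*E*p^2*q^2 + 4*E^2*q^3 + s^1*(4*E*q^4 - 7*E*p*q^3 +
    s^1*(-E*q^4 + s^2*(E^2*q^4))))))))))))))))))))))

lemma PY11_cont (E : ℝ) : Continuous (fun t : ℝ × ℝ × ℝ => PY11 t.1 E t.2.1 t.2.2) := by
  unfold PY11
  fun_prop

lemma PY11_eq (s E p q : ℝ) (hs : s ≠ 0) : (A2 s E p q * A1 s E p q * (A1 s E p q * A2 s E p q)) 1 1 = PY11 s E p q := by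
  simp only [A1, A2, deltaB, PY11, Matrix.mul_apply, Fin.sum_univ_two]
  simp
  field_simp
  ring

lemma lim_p (E : ℝ) (hE : 0 < E) :
    Tendsto (fun a : ℝ => (Real.cos (Real.sqrt E * a) - 1) / a ^ 2) (nhdsWithin 0 (Set.Ioi 0))
      (nhds (-E / 2)) := by
  rw [tendsto_iff_norm_sub_tendsto_zero]
  have h0 : Tendsto (fun a : ℝ => E ^ 2 * (5 / 96) * a ^ 2) (nhdsWithin 0 (Set.Ioi 0)) (nhds 0) := by
    have : Continuous (fun a : ℝ => E ^ 2 * (5 / 96) * a ^ 2) := by fun_prop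
    simpa using (this.tendsto 0).mono_left nhdsWithin_le_nhds
  have hk : 0 < Real.sqrt E := Real.sqrt_pos.2 hE
  have hk2 : Real.sqrt E ^ 2 = E := Real.sq_sqrt hE.le
  refine squeeze_zero' (Eventually.of_forall fun _ => norm_nonneg _) ?_ h0
  filter_upwards [Ioo_mem_nhdsGT (show (0 : ℝ) < 1 / Real.sqrt E by positivity)] with a ha
  obtain ⟨ha0, ha1⟩ := ha
  rw [lt_div_iff₀ hk] at ha1
  have hx : |Real.sqrt E * a| ≤ 1 := by
    rw [abs_of_pos (by positivity)]; linarith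
  have hb := Real.cos_bound hx
  have h4 : |Real.sqrt E * a| ^ 4 = E ^ 2 * a ^ 4 := by
    rw [abs_of_pos (by positivity), mul_pow, show Real.sqrt E ^ 4 = (Real.sqrt E ^ 2) ^ 2 by ring, hk2]
  rw [h4, mul_pow, hk2] at hb
  have e : (Real.cos (Real.sqrt E * a) - 1) / a ^ 2 - -E / 2
      = (Real.cos (Real.sqrt E * a) - (1 - E * a ^ 2 / 2)) / a ^ 2 := by
    field_simp; ring
  rw [e, Real.norm_eq_abs, abs_div, abs_of_pos (show 0 < a ^ 2 by positivity),
    div_le_iff₀ (by positivity)]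
  refine hb.trans (le_of_eq ?_)
  ring

lemma lim_q (E : ℝ) (hE : 0 < E) :
    Tendsto (fun a : ℝ => (Real.sin (Real.sqrt E * a) / (Real.sqrt E * a) - 1) / a ^ 2)
      (nhdsWithin 0 (Set.Ioi 0)) (nhds (-E / 6)) := by
  rw [tendsto_iff_norm_sub_tendsto_zero]
  have h0 : Tendsto (fun a : ℝ => Real.sqrt E ^ 4 / 100 * a ^ 2) (nhdsWithin 0 (Set.Ioi 0))
      (nhds 0) := by
    have : Continuous (fun a : ℝ => Real.sqrt E ^ 4 / 100 * a ^ 2) := by fun_prop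
    simpa using (this.tendsto 0).mono_left nhdsWithin_le_nhds
  have hk : 0 < Real.sqrt E := Real.sqrt_pos.2 hE
  have hk2 : Real.sqrt E ^ 2 = E := Real.sq_sqrt hE.le
  refine squeeze_zero' (Eventually.of_forall fun _ => norm_nonneg _) ?_ h0
  filter_upwards [Ioo_mem_nhdsGT (show (0 : ℝ) < 1 / Real.sqrt E by positivity)] with a ha
  obtain ⟨ha0, ha1⟩ := ha
  rw [lt_div_iff₀ hk] at ha1
  have hx : |Real.sqrt E * a| ≤ 1 := by
    rw [abs_of_pos (by positivity)]; linarith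
  have hb := Real.sin_bound hx
  rw [abs_of_pos (show 0 < Real.sqrt E * a by positivity)] at hb
  rw [← hk2]
  rw [Real.sqrt_sq hk.le]
  generalize Real.sqrt E = k at *
  have e : (Real.sin (k * a) / (k * a) - 1) / a ^ 2 - -k ^ 2 / 6
      = (Real.sin (k * a) - (k * a - (k * a) ^ 3 / 6)) / (k * a ^ 3) := by
    field_simp; ring
  rw [e, Real.norm_eq_abs, abs_div, abs_of_pos (show 0 < k * a ^ 3 by positivity),
    div_le_iff₀ (by positivity)]
  refine hb.trans (le_of_eq ?_)
  ring

lemma lim_of_cont (E : ℝ) (hE : 0 < E) (P : ℝ → ℝ → ℝ → ℝ → ℝ)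
    (hP : Continuous (fun t : ℝ × ℝ × ℝ => P t.1 E t.2.1 t.2.2)) :
    Tendsto (fun a : ℝ => P (Real.sqrt a) E ((Real.cos (Real.sqrt E * a) - 1) / a ^ 2)
      ((Real.sin (Real.sqrt E * a) / (Real.sqrt E * a) - 1) / a ^ 2))
      (nhdsWithin 0 (Set.Ioi 0)) (nhds (P 0 E (-E / 2) (-E / 6))) := by
  have hs : Tendsto (fun a : ℝ => Real.sqrt a) (nhdsWithin 0 (Set.Ioi 0)) (nhds 0) := by
    simpa using (Real.continuous_sqrt.tendsto 0).mono_left nhdsWithin_le_nhds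
  exact (hP.tendsto (0, -E / 2, -E / 6)).comp
    (hs.prodMk_nhds ((lim_p E hE).prodMk_nhds (lim_q E hE)))

lemma freeT_eq (E a : ℝ) (hE : 0 < E) (ha : 0 < a) (s p q : ℝ) (hs : s = Real.sqrt a)
    (hp : p = (Real.cos (Real.sqrt E * a) - 1) / a ^ 2)
    (hq : q = (Real.sin (Real.sqrt E * a) / (Real.sqrt E * a) - 1) / a ^ 2) :
    freeT E a = !![1 + s^4*p, s^2*(1+s^4*q); -(E*(s^2*(1+s^4*q))), 1+s^4*p] := by
  have hk : 0 < Real.sqrt E := Real.sqrt_pos.2 hE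
  have hk2 : Real.sqrt E ^ 2 = E := Real.sq_sqrt hE.le
  have hs2 : s ^ 2 = a := by rw [hs, Real.sq_sqrt ha.le]
  have hs4 : s ^ 4 = a ^ 2 := by rw [← hs2]; ring
  have h1 : Real.cos (Real.sqrt E * a) = 1 + s^4*p := by rw [hs4, hp]; field_simp; ring
  have h2 : Real.sin (Real.sqrt E * a) = Real.sqrt E * (s^2*(1+s^4*q)) := by
    rw [hs4, hs2, hq]; field_simp; ring
  unfold freeT
  rw [h1, h2]
  have h3 : Real.sqrt E * (s^2*(1+s^4*q)) / Real.sqrt E = s^2*(1+s^4*q) := by field_simp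
  have h4 : Real.sqrt E * (Real.sqrt E * (s^2*(1+s^4*q))) = E * (s^2*(1+s^4*q)) := by
    rw [← mul_assoc, ← sq, hk2]
  rw [h3, h4]

lemma y₁_eq (a : ℝ) (ha : 0 < a) : y₁ a = 1 / Real.sqrt a ^ 3 - 1 / Real.sqrt a ^ 2 := by
  unfold y₁
  rw [Real.sq_sqrt ha.le, neg_div, Real.rpow_neg ha.le, Real.sqrt_eq_rpow, ← Real.rpow_natCast,
    ← Real.rpow_mul ha.le]
  norm_num

lemma y₂_eq (a : ℝ) (ha : 0 < a) : y₂ a = 1 / Real.sqrt a - 1 / Real.sqrt a ^ 2 := by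
  unfold y₂
  rw [Real.sq_sqrt ha.le, neg_div, Real.rpow_neg ha.le, Real.sqrt_eq_rpow]
  norm_num

/-- entrywise, `M_a(E) → M(E) = [[1 - (5/3)E, 1], [-(5/3)E, 1]]`
as `a → 0⁺`. -/
theorem stmt11 (E : ℝ) (hE : 0 < E) :
    ∀ i j : Fin 2,
      Tendsto (fun a : ℝ => Mfull E a i j) (nhdsWithin 0 (Set.Ioi 0))
        (nhds ((Matrix.of ![![1 - (5 / 3) * E, 1], ![-((5 / 3) * E), 1]]) i j)) := by
  have hX00 := lim_of_cont E hE PX00 (PX00_cont E)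
  have hX01 := lim_of_cont E hE PX01 (PX01_cont E)
  have hX10 := lim_of_cont E hE PX10 (PX10_cont E)
  have hX11 := lim_of_cont E hE PX11 (PX11_cont E)
  have hY00 := lim_of_cont E hE PY00 (PY00_cont E)
  have hY01 := lim_of_cont E hE PY01 (PY01_cont E)
  have hY10 := lim_of_cont E hE PY10 (PY10_cont E)
  have hY11 := lim_of_cont E hE PY11 (PY11_cont E)
  have key : ∀ a : ℝ, 0 < a → ∀ s p q : ℝ, s = Real.sqrt a →
      p = (Real.cos (Real.sqrt E * a) - 1) / a ^ 2 →
      q = (Real.sin (Real.sqrt E * a) / (Real.sqrt E * a) - 1) / a ^ 2 →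
      Mfull E a = !![PY00 s E p q, PY01 s E p q; PY10 s E p q, PY11 s E p q] *
        !![PX00 s E p q, PX01 s E p q; PX10 s E p q, PX11 s E p q] := by
    intro a ha s p q hs hp hq
    have hs0 : s ≠ 0 := by rw [hs]; exact (Real.sqrt_pos.2 ha).ne'
    have h1 : Mone E a = A1 s E p q := by
      rw [Mone, A1, freeT_eq E a hE ha s p q hs hp hq, y₁_eq a ha, hs]
    have h2 : Mtwo E a = A2 s E p q := by
      rw [Mtwo, A2, freeT_eq E a hE ha s p q hs hp hq, y₂_eq a ha, hs]
    rw [← PX00_eq s E p q hs0, ← PX01_eq s E p q hs0, ← PX10_eq s E p q hs0,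
      ← PX11_eq s E p q hs0, ← PY00_eq s E p q hs0, ← PY01_eq s E p q hs0,
      ← PY10_eq s E p q hs0, ← PY11_eq s E p q hs0, ← Matrix.eta_fin_two, ← Matrix.eta_fin_two,
      Mfull, h1, h2]
    simp only [pow_two, mul_assoc]
  have lim : ∀ (i j : Fin 2) (f : ℝ → ℝ) (l l' : ℝ),
      Tendsto f (nhdsWithin 0 (Set.Ioi 0)) (nhds l) → l = l' →
      (∀ a : ℝ, 0 < a → Mfull E a i j = f a) →
      Tendsto (fun a : ℝ => Mfull E a i j) (nhdsWithin 0 (Set.Ioi 0)) (nhds l') := by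
    intro i j f l l' hf hl h
    rw [← hl]
    refine hf.congr' ?_
    filter_upwards [self_mem_nhdsWithin] with a ha
    exact (h a ha).symm
  intro i j
  fin_cases i <;> fin_cases j
  · refine lim 0 0 _ _ _ ((hY00.mul hX00).add (hY01.mul hX10)) ?_ ?_
    · simp [PY00, PX00, PY01, PX10]; ring
    · intro a ha
      rw [key a ha _ _ _ rfl rfl rfl]
      simp [Matrix.mul_apply, Fin.sum_univ_two]
  · refine lim 0 1 _ _ _ ((hY00.mul hX01).add (hY01.mul hX11)) ?_ ?_
    · simp [PY00, PX01, PY01, PX11]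
    · intro a ha
      rw [key a ha _ _ _ rfl rfl rfl]
      simp [Matrix.mul_apply, Fin.sum_univ_two]
  · refine lim 1 0 _ _ _ ((hY10.mul hX00).add (hY11.mul hX10)) ?_ ?_
    · simp [PY10, PX00, PY11, PX10]; ring
    · intro a ha
      rw [key a ha _ _ _ rfl rfl rfl]
      simp [Matrix.mul_apply, Fin.sum_univ_two]
  · refine lim 1 1 _ _ _ ((hY10.mul hX01).add (hY11.mul hX11)) ?_ ?_
    · simp [PY10, PX01, PY11, PX11]
    · intro a ha
      rw [key a ha _ _ _ rfl rfl rfl]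
      simp [Matrix.mul_apply, Fin.sum_univ_two]
end

section
/- Let φ ∈ (0, π), g ∈ ℝ, and set η = g/(2 sin φ). Let f₊ = (1, 1 − e^{−iφ}) and f₋ = (1, 1 − e^{iφ}) in ℂ², let M(φ) = [[2cos φ − 1, 1], [2cos φ − 2, 1]] and B(g) = [[1, 0], [g, 1]], both viewed as complex 2×2 matrices. Then for every p ∈ ℂ, B(g) M(φ) (p f₊ + p̄ f₋) = p' f₊ + p̄' f₋, where p' = e^{iφ}(1 − iη) p − iη e^{−iφ} p̄ and p̄, p̄' denote complex conjugates. -/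
open Matrix Complex

/-- exact one-step Prüfer recursion. For `φ ∈ (0,π)`, `g ∈ ℝ`,
`η = g/(2 sin φ)`, the complex matrices `M(φ) = [[2cos φ - 1, 1], [2cos φ - 2, 1]]` and
`B(g) = [[1,0],[g,1]]`, the eigenvectors `f₊ = (1, 1 - e^{-iφ})`, `f₋ = (1, 1 - e^{iφ})`,
and every `p ∈ ℂ`, one has `B(g) M(φ) (p f₊ + p̄ f₋) = p' f₊ + p̄' f₋` with
`p' = e^{iφ}(1 - iη) p - iη e^{-iφ} p̄`. -/
theorem stmt17 (φ g : ℝ) (hφ : φ ∈ Set.Ioo 0 Real.pi) (p : ℂ) :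
    let η : ℝ := g / (2 * Real.sin φ)
    let fplus : Fin 2 → ℂ := ![1, 1 - Complex.exp (-(φ * Complex.I))]
    let fminus : Fin 2 → ℂ := ![1, 1 - Complex.exp (φ * Complex.I)]
    let Mφ : Matrix (Fin 2) (Fin 2) ℂ :=
      Matrix.of ![![2 * (Real.cos φ : ℂ) - 1, 1], ![2 * (Real.cos φ : ℂ) - 2, 1]]
    let Bg : Matrix (Fin 2) (Fin 2) ℂ := Matrix.of ![![1, 0], ![(g : ℂ), 1]]
    let p' : ℂ := Complex.exp (φ * Complex.I) * (1 - Complex.I * (η : ℂ)) * p -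
      Complex.I * (η : ℂ) * Complex.exp (-(φ * Complex.I)) * (starRingEnd ℂ p)
    (Bg * Mφ).mulVec (p • fplus + (starRingEnd ℂ p) • fminus) =
      p' • fplus + (starRingEnd ℂ p') • fminus := by
  intro η fplus fminus Mφ Bg p'
  have hs : Real.sin φ ≠ 0 := (Real.sin_pos_of_mem_Ioo hφ).ne'
  have hgr : g = η * (2 * Real.sin φ) := by
    simp only [η]; field_simp
  have hg : (g : ℂ) = (η : ℂ) *
      ((Complex.exp (-(φ * Complex.I)) - Complex.exp (φ * Complex.I)) * Complex.I) := by
    conv_lhs => rw [hgr]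
    push_cast
    rw [Complex.sin, neg_mul]
    ring
  have hc : 2 * (Real.cos φ : ℂ) =
      Complex.exp (φ * Complex.I) + Complex.exp (-(φ * Complex.I)) := by
    push_cast
    rw [Complex.cos, neg_mul]
    ring
  have hEF : Complex.exp (φ * Complex.I) * Complex.exp (-(φ * Complex.I)) = 1 := by
    rw [← Complex.exp_add]; simp
  have hp : starRingEnd ℂ p' =
      Complex.exp (-(φ * Complex.I)) * (1 + Complex.I * (η : ℂ)) * (starRingEnd ℂ p) +
      Complex.I * (η : ℂ) * Complex.exp (φ * Complex.I) * p := by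
    simp only [p', map_sub, map_mul, map_one, ← Complex.exp_conj, Complex.conj_I,
      Complex.conj_ofReal, map_neg, Complex.conj_conj, mul_neg, neg_neg]
    ring
  rw [hp]
  simp only [p', fplus, fminus, Mφ, Bg]
  clear_value η
  rw [hc, hg]
  generalize Complex.exp (φ * Complex.I) = E at *
  generalize Complex.exp (-(φ * Complex.I)) = F at *
  generalize starRingEnd ℂ p = q at *
  rw [← Matrix.mulVec_mulVec]
  ext i
  fin_cases i
  · simp [Matrix.mulVec, dotProduct, Fin.sum_univ_two]
    ring
  · simp [Matrix.mulVec, dotProduct, Fin.sum_univ_two]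
    linear_combination (p + q) * hEF
end
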